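/- Let Ψ be the set of potentials on an infinite recurrent rooted network (G,c,o). Then M(r) := max_{ψ∈Ψ} min_{v∈∂B(o,r)} ψ(v) tends to infinity as r → ∞. -/

import Mathlib

open scoped ENNReal
open Filter Topology Classical
noncomputable section

/-- A rooted network: a connected, locally finite simple graph with positive
symmetric edge conductances (extended by `0` to non-edges) and a root `o`. -/
structure RootedNetwork (V : Type*) where
  G : SimpleGraph V
  locallyFinite : ∀ x : V, (G.neighborSet x).Finite
  connected : G.Connected
  c : V → V → ℝ
  c_symm : ∀ x y, c x y = c y x
  c_pos : ∀ x y, G.Adj x y → 0 < c x y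
  c_eq_zero : ∀ x y, ¬ G.Adj x y → c x y = 0
  o : V

namespace RootedNetwork

variable {V : Type*}

/-- The vertex weight `c_x = Σ_{z ∼ x} c_{xz}`. -/
noncomputable def cv (N : RootedNetwork V) (x : V) : ℝ := ∑' y, N.c x y

/-- The transition probability `p(x,y) = c_{xy} / c_x` of the network random walk. -/
noncomputable def p (N : RootedNetwork V) (x y : V) : ℝ≥0∞ :=
  ENNReal.ofReal (N.c x y / N.cv x)

/-- The probability that the network random walk started at `x` begins with the
given finite sequence of steps. -/
noncomputable def pathProb (N : RootedNetwork V) : V → List V → ℝ≥0∞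
  | _, [] => 1
  | x, y :: l => N.p x y * pathProb N y l

/-- The probability, starting from `x`, that the walk ever visits `b`
(`P_x(τ_b < ∞)`), computed by decomposing over the finite path up to the first
visit of `b`. -/
noncomputable def hitProb (N : RootedNetwork V) (x b : V) : ℝ≥0∞ :=
  if x = b then 1
  else ∑' l : {l : List V // l.getLast? = some b ∧ b ∉ l.dropLast}, N.pathProb x l.1

/-- A rooted network is recurrent if the walk started from any vertex almost
surely visits the root `o`. -/
def Recurrent (N : RootedNetwork V) : Prop := ∀ x : V, N.hitProb x N.o = 1

/-- The Green kernel `G_o(x,y) = Σ_{n ≥ 0} P_x(X_n = y, τ_o > n)` of the walk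
killed at the root, computed as a sum over finite paths from `x` to `y`
avoiding `o` (the `n = 0` term is the first summand). -/
noncomputable def GreenKer (N : RootedNetwork V) (x y : V) : ℝ≥0∞ :=
  (if x = y ∧ x ≠ N.o then 1 else 0) +
    ∑' l : {l : List V // l.getLast? = some y ∧ N.o ∉ x :: l}, N.pathProb x l.1

/-- The Green density `g_o(x,y) = G_o(x,y) / c_y`. -/
noncomputable def greenDensity (N : RootedNetwork V) (x y : V) : ℝ≥0∞ :=
  N.GreenKer x y / ENNReal.ofReal (N.cv y)

/-- The network Laplacian `Δ f (v) = Σ_{x ∼ v} c_{vx} (f(x) - f(v))`. -/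
noncomputable def lap (N : RootedNetwork V) (f : V → ℝ) (v : V) : ℝ :=
  ∑' x, N.c v x * (f x - f v)

/-- A potential: a nonnegative function vanishing at `o`, with Laplacian `1`
at `o`, harmonic everywhere else. -/
def IsPotential (N : RootedNetwork V) (h : V → ℝ) : Prop :=
  (∀ v, 0 ≤ h v) ∧ h N.o = 0 ∧ N.lap h N.o = 1 ∧ ∀ v, v ≠ N.o → N.lap h v = 0

end RootedNetwork

/-!
Suppose that for infinitely many `r` every potential is at most `K` somewhere on the sphere
`∂B(o, r)`. By the minimax theorem each such sphere carries a probability measure `ν` with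
`∑ ν ψ ≤ K` for all potentials `ψ`. The Green potentials of these measures in large finite sets
have Laplacian close to `1` at the root, because by recurrence the walk started on the sphere hits
`o` before leaving a large enough set. As `r → ∞` along an ultrafilter they converge to a potential
`ψ`. Testing them against the superharmonic function `ψ ⊓ t` gives `∑ ψ (-Δ (ψ ⊓ t)) ≤ K` for all
`t`, so `ψ` has finite energy and its gradient is a unit flow of finite energy from `o` to infinity.
On a recurrent network there is none, by the Cauchy–Schwarz inequality against functions `χ` of
finite support with `χ o = 1` and arbitrarily small energy.
-/

lemma tsum_list_eq_tsum_cons {α : Type*} {h : List α → ℝ≥0∞} (hnil : h [] = 0) :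
    ∑' l, h l = ∑' (y) (l), h (y :: l) := by
  have hinj : Function.Injective fun q : α × List α => q.1 :: q.2 := by
    rintro ⟨y, l⟩ ⟨z, m⟩ h
    simpa using h
  have hsupp : Function.support h ⊆ Set.range fun q : α × List α => q.1 :: q.2 := by
    rintro (_ | ⟨y, l⟩) hl
    · exact absurd hnil hl
    · exact ⟨(y, l), rfl⟩
  rw [← hinj.tsum_eq hsupp, ENNReal.tsum_prod']

lemma exists_tendsto_of_eventually_mem_Icc {ι α β : Type*} [Preorder β] [TopologicalSpace β]
    [CompactIccSpace β] {U : Ultrafilter ι} {f : ι → α → β} {a b : α → β}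
    (h : ∀ x, ∀ᶠ i in U, f i x ∈ Set.Icc (a x) (b x)) : ∃ g, Tendsto f U (𝓝 g) := by
  have hlim (x : α) : ∃ y, Tendsto (fun i => f i x) U (𝓝 y) := by
    obtain ⟨y, _, hy⟩ := isCompact_Icc.ultrafilter_le_nhds' (U.map fun i => f i x) (h x)
    exact ⟨y, hy⟩
  choose g hg using hlim
  exact ⟨g, tendsto_pi_nhds.2 hg⟩

lemma dist_getVert_eq {V : Type*} {G : SimpleGraph V} {u v : V} {q : G.Walk u v}
    (hq : q.length = G.dist u v) {k : ℕ} (hk : k ≤ q.length) : G.dist u (q.getVert k) = k := by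
  rw [← SimpleGraph.length_eq_dist_of_subwalk hq (q.isSubwalk_take k), q.take_length,
    min_eq_left hk]

lemma exists_mem_stdSimplex_dotProduct_le {ι : Type*} [Fintype ι] [Nonempty ι] {Y : Set (ι → ℝ)}
    (hconv : Convex ℝ Y) (hcomp : IsCompact Y) {K : ℝ} (h : ∀ y ∈ Y, ∃ i, y i ≤ K) :
    ∃ ν ∈ stdSimplex ℝ ι, ∀ y ∈ Y, ν ⬝ᵥ y ≤ K := by
  have hsimplex : (stdSimplex ℝ ι).Nonempty := ⟨_, single_mem_stdSimplex ℝ (Classical.arbitrary ι)⟩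
  obtain rfl | hY := Y.eq_empty_or_nonempty
  · exact ⟨hsimplex.some, hsimplex.some_mem, by simp⟩
  let pairing : (ι → ℝ) →ₗ[ℝ] (ι → ℝ) →ₗ[ℝ] ℝ := dotProductBilin ℝ ℝ
  obtain ⟨ν, hν, y₀, hy₀, hsaddle⟩ := Sion.exists_isSaddlePointOn (f := fun ν y => pairing ν y)
    hsimplex (convex_stdSimplex ℝ ι) (isCompact_stdSimplex ℝ ι)
    (fun y _ => (pairing.flip y).continuous_of_finiteDimensional.lowerSemicontinuous
      |>.lowerSemicontinuousOn _)
    (fun y _ => ((pairing.flip y).convexOn (convex_stdSimplex ℝ ι)).quasiconvexOn)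
    hconv hY hcomp
    (fun ν _ => (pairing ν).continuous_of_finiteDimensional.upperSemicontinuous
      |>.upperSemicontinuousOn _)
    (fun ν _ => ((pairing ν).concaveOn hconv).quasiconcaveOn)
  obtain ⟨i, hi⟩ := h y₀ hy₀
  refine ⟨ν, hν, fun y hy => (hsaddle _ (single_mem_stdSimplex ℝ i) y hy).trans ?_⟩
  simpa [pairing] using hi

namespace RootedNetwork

variable {V : Type*} (N : RootedNetwork V)

/-! ### The Laplacian -/

/-- The neighbours of a vertex, as a finite set. -/
def neighbors (v : V) : Finset V := (N.locallyFinite v).toFinset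

lemma mem_neighbors {v x : V} : x ∈ N.neighbors v ↔ N.G.Adj v x := by
  simp [neighbors]

lemma c_nonneg (x y : V) : 0 ≤ N.c x y := by
  by_cases h : N.G.Adj x y
  · exact (N.c_pos x y h).le
  · exact (N.c_eq_zero x y h).ge

lemma c_eq_zero_of_notMem {v x : V} {T : Finset V} (hT : N.neighbors v ⊆ T) (hx : x ∉ T) :
    N.c v x = 0 :=
  N.c_eq_zero v x fun h => hx (hT (N.mem_neighbors.2 h))

lemma cv_nonneg (v : V) : 0 ≤ N.cv v := tsum_nonneg (N.c_nonneg v)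

lemma lap_eq_sum {v : V} {T : Finset V} (hT : N.neighbors v ⊆ T) (f : V → ℝ) :
    N.lap f v = ∑ x ∈ T, N.c v x * (f x - f v) :=
  tsum_eq_sum fun x hx => by rw [N.c_eq_zero_of_notMem hT hx, zero_mul]

lemma lap_eq_sum_sub (f : V → ℝ) (v : V) :
    N.lap f v = ∑ x ∈ N.neighbors v, N.c v x * f x - N.cv v * f v := by
  have hcv : N.cv v = ∑ x ∈ N.neighbors v, N.c v x :=
    tsum_eq_sum fun x hx => N.c_eq_zero_of_notMem subset_rfl hx
  simp only [N.lap_eq_sum subset_rfl, hcv, Finset.sum_mul, ← Finset.sum_sub_distrib, mul_sub]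

lemma lap_add (f g : V → ℝ) : N.lap (f + g) = N.lap f + N.lap g := by
  funext v
  simp only [lap_eq_sum_sub, Pi.add_apply, mul_add, Finset.sum_add_distrib]
  ring

lemma lap_smul (a : ℝ) (f : V → ℝ) : N.lap (a • f) = a • N.lap f := by
  funext v
  simp only [lap_eq_sum_sub, Pi.smul_apply, smul_eq_mul, mul_sub, Finset.mul_sum, mul_left_comm a]

lemma lap_neg (f : V → ℝ) : N.lap (-f) = -N.lap f := by
  simpa using N.lap_smul (-1) f

lemma lap_sub (f g : V → ℝ) : N.lap (f - g) = N.lap f - N.lap g := by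
  rw [sub_eq_add_neg, lap_add, lap_neg, ← sub_eq_add_neg]

lemma lap_const (a : ℝ) : N.lap (fun _ => a) = 0 := by
  funext v
  simp [lap]

lemma continuous_lap : Continuous N.lap :=
  continuous_pi fun v => by
    simp only [lap_eq_sum_sub]
    fun_prop

variable {N}

lemma lap_le_lap {f g : V → ℝ} (hfg : f ≤ g) {v : V} (hv : f v = g v) :
    N.lap f v ≤ N.lap g v := by
  rw [N.lap_eq_sum subset_rfl, N.lap_eq_sum subset_rfl, hv]
  exact Finset.sum_le_sum fun x _ =>
    mul_le_mul_of_nonneg_left (sub_le_sub_right (hfg x) _) (N.c_nonneg v x)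

lemma lap_congr {f g : V → ℝ} {v : V} (hv : f v = g v) (h : ∀ x ∈ N.neighbors v, f x = g x) :
    N.lap f v = N.lap g v := by
  rw [N.lap_eq_sum subset_rfl, N.lap_eq_sum subset_rfl, hv]
  exact Finset.sum_congr rfl fun x hx => by rw [h x hx]

/-! ### The Dirichlet problem on a finite set -/

lemma eq_of_forall_le_of_lap_nonpos {f : V → ℝ} {y z : V} (hmin : ∀ x, f y ≤ f x)
    (hl : N.lap f y ≤ 0) (hyz : N.G.Adj y z) : f z = f y := by
  have hterm : ∀ x ∈ N.neighbors y, 0 ≤ N.c y x * (f x - f y) := fun x _ =>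
    mul_nonneg (N.c_nonneg y x) (sub_nonneg.2 (hmin x))
  rw [N.lap_eq_sum subset_rfl] at hl
  have hzero := (Finset.sum_eq_zero_iff_of_nonneg hterm).1
    (hl.antisymm (Finset.sum_nonneg hterm)) z (N.mem_neighbors.2 hyz)
  exact sub_eq_zero.1 ((mul_eq_zero.1 hzero).resolve_left (N.c_pos y z hyz).ne')

lemma nonneg_of_lap_nonpos {S : Finset V} {w : V} (hw : w ∉ S) {f : V → ℝ}
    (hout : ∀ v ∉ S, 0 ≤ f v) (hl : ∀ v ∈ S, N.lap f v ≤ 0) : 0 ≤ f := by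
  intro v
  by_contra! hv
  have hvS : v ∈ S := by_contra fun h => (hout v h).not_gt hv
  obtain ⟨m, _, hmin⟩ := S.exists_min_image f ⟨v, hvS⟩
  have hneg : f m < 0 := (hmin v hvS).trans_lt hv
  have hmin' : ∀ x, f m ≤ f x := fun x =>
    if hx : x ∈ S then hmin x hx else hneg.le.trans (hout x hx)
  have hconst : ∀ x, f x = f m := fun x => by
    have hreach := N.connected.preconnected m x
    rw [SimpleGraph.reachable_iff_reflTransGen] at hreach
    induction hreach with
    | refl => rfl
    | @tail y z _ hyz hy =>
      have hyS : y ∈ S := by_contra fun h => (hout y h).not_gt (hy ▸ hneg)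
      rw [← hy]
      exact eq_of_forall_le_of_lap_nonpos (fun x => hy ▸ hmin' x) (hl y hyS) hyz
  exact (hout w hw).not_gt (hconst w ▸ hneg)

lemma eq_zero_of_lap_eq_zero {S : Finset V} {w : V} (hw : w ∉ S) {f : V → ℝ}
    (hout : ∀ v ∉ S, f v = 0) (hl : ∀ v ∈ S, N.lap f v = 0) : f = 0 := by
  refine le_antisymm (neg_nonneg.1 ?_) ?_
  · refine nonneg_of_lap_nonpos (N := N) hw (fun v hv => ?_) fun v hv => ?_
    · simp [hout v hv]
    · simp [lap_neg, hl v hv]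
  · exact nonneg_of_lap_nonpos hw (fun v hv => (hout v hv).ge) fun v hv => (hl v hv).le

lemma exists_lap_eq_of_zero_boundary {S : Finset V} {w : V} (hw : w ∉ S) (b : V → ℝ) :
    ∃ f : V → ℝ, (∀ v ∉ S, f v = 0) ∧ ∀ v ∈ S, N.lap f v = b v := by
  let extend : (S → ℝ) →ₗ[ℝ] V → ℝ := Function.ExtendByZero.linearMap ℝ Subtype.val
  have extend_coe (a : S → ℝ) (v : S) : extend a v = a v :=
    Subtype.val_injective.extend_apply a (0 : V → ℝ) v
  have extend_out (a : S → ℝ) {v : V} (hv : v ∉ S) : extend a v = 0 :=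
    Function.extend_apply' a (0 : V → ℝ) v fun ⟨x, hx⟩ => hv (hx ▸ x.2)
  let lapS : (S → ℝ) →ₗ[ℝ] (S → ℝ) :=
    { toFun := fun a v => N.lap (extend a) v
      map_add' := fun a b => by ext v; simp [lap_add]
      map_smul' := fun r a => by ext v; simp [lap_smul] }
  have hinj : Function.Injective lapS := by
    refine (injective_iff_map_eq_zero lapS).2 fun a ha => ?_
    have hzero : extend a = 0 := eq_zero_of_lap_eq_zero (N := N) hw
      (fun v hv => extend_out a hv) fun v hv => congrFun ha ⟨v, hv⟩
    ext v
    rw [← extend_coe a, hzero]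
    rfl
  obtain ⟨a, ha⟩ := (LinearMap.injective_iff_surjective.1 hinj) fun v => b v
  exact ⟨extend a, fun v hv => extend_out a hv, fun v hv => congrFun ha ⟨v, hv⟩⟩

lemma exists_lap_eq {S : Finset V} {w : V} (hw : w ∉ S) (g b : V → ℝ) :
    ∃ f : V → ℝ, (∀ v ∉ S, f v = g v) ∧ ∀ v ∈ S, N.lap f v = b v := by
  obtain ⟨f, hf, hlap⟩ := exists_lap_eq_of_zero_boundary (N := N) hw (b - N.lap g)
  exact ⟨f + g, fun v hv => by simp [hf v hv], fun v hv => by simp [lap_add, hlap v hv]⟩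

/-! ### The Dirichlet form -/

variable (N)

/-- The Dirichlet form of the network induced on the finite vertex set `T`. The sum runs over
ordered pairs, so every edge is counted twice. -/
def dirichletForm (T : Finset V) (f g : V → ℝ) : ℝ :=
  (∑ e ∈ T ×ˢ T, N.c e.1 e.2 * ((f e.1 - f e.2) * (g e.1 - g e.2))) / 2

lemma dirichletForm_comm (T : Finset V) (f g : V → ℝ) :
    N.dirichletForm T f g = N.dirichletForm T g f := by
  simp only [dirichletForm, mul_comm (f _ - f _)]

lemma dirichletForm_sq_le (T : Finset V) (f g : V → ℝ) :
    N.dirichletForm T f g ^ 2 ≤ N.dirichletForm T f f * N.dirichletForm T g g := by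
  have hsum := Finset.sum_sq_le_sum_mul_sum_of_sq_le_mul (T ×ˢ T)
    (r := fun e => N.c e.1 e.2 * ((f e.1 - f e.2) * (g e.1 - g e.2)))
    (f := fun e => N.c e.1 e.2 * ((f e.1 - f e.2) * (f e.1 - f e.2)))
    (g := fun e => N.c e.1 e.2 * ((g e.1 - g e.2) * (g e.1 - g e.2)))
    (fun e _ => mul_nonneg (N.c_nonneg _ _) (mul_self_nonneg _))
    (fun e _ => mul_nonneg (N.c_nonneg _ _) (mul_self_nonneg _)) fun e _ => le_of_eq (by ring)
  simp only [dirichletForm]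
  linarith

lemma sum_mul_lap_eq_neg_dirichletForm {S T : Finset V} (hST : S ⊆ T)
    (hT : ∀ v ∈ S, N.neighbors v ⊆ T) {f : V → ℝ} (hf : ∀ v ∉ S, f v = 0) (g : V → ℝ) :
    ∑ v ∈ S, f v * N.lap g v = -N.dirichletForm T f g := by
  have hdouble : ∑ v ∈ S, f v * N.lap g v =
      ∑ v ∈ T, ∑ x ∈ T, f v * (N.c v x * (g x - g v)) := by
    rw [Finset.sum_subset hST fun v _ hv => by rw [hf v hv, zero_mul]]
    refine Finset.sum_congr rfl fun v _ => ?_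
    by_cases hv : v ∈ S
    · rw [N.lap_eq_sum (hT v hv), Finset.mul_sum]
    · simp [hf v hv]
  have hswap : ∑ v ∈ S, f v * N.lap g v =
      ∑ v ∈ T, ∑ x ∈ T, f x * (N.c v x * (g v - g x)) := by
    rw [hdouble, Finset.sum_comm]
    simp only [N.c_symm]
  have hform : 2 * N.dirichletForm T f g =
      -(∑ v ∈ T, ∑ x ∈ T, f v * (N.c v x * (g x - g v)) +
        ∑ v ∈ T, ∑ x ∈ T, f x * (N.c v x * (g v - g x))) := by
    simp only [dirichletForm, Finset.sum_product, ← Finset.sum_add_distrib,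
      ← Finset.sum_neg_distrib]
    rw [mul_div_cancel₀ _ two_ne_zero]
    exact Finset.sum_congr rfl fun v _ => Finset.sum_congr rfl fun x _ => by ring
  rw [← hdouble, ← hswap] at hform
  linarith

lemma exists_subset_neighbors_subset (S : Finset V) :
    ∃ T, S ⊆ T ∧ ∀ v ∈ S, N.neighbors v ⊆ T :=
  ⟨S ∪ S.biUnion N.neighbors, Finset.subset_union_left, fun _ hv =>
    (Finset.subset_biUnion_of_mem N.neighbors hv).trans Finset.subset_union_right⟩

lemma sum_mul_lap_comm {S : Finset V} {f g : V → ℝ} (hf : ∀ v ∉ S, f v = 0)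
    (hg : ∀ v ∉ S, g v = 0) : ∑ v ∈ S, f v * N.lap g v = ∑ v ∈ S, g v * N.lap f v := by
  obtain ⟨T, hST, hT⟩ := N.exists_subset_neighbors_subset S
  rw [N.sum_mul_lap_eq_neg_dirichletForm hST hT hf, N.sum_mul_lap_eq_neg_dirichletForm hST hT hg,
    dirichletForm_comm]

lemma sum_mul_lap_sq_le {S : Finset V} {f g : V → ℝ} (hf : ∀ v ∉ S, f v = 0)
    (hg : ∀ v ∉ S, g v = 0) :
    (∑ v ∈ S, f v * N.lap g v) ^ 2 ≤
      (∑ v ∈ S, f v * N.lap f v) * ∑ v ∈ S, g v * N.lap g v := by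
  obtain ⟨T, hST, hT⟩ := N.exists_subset_neighbors_subset S
  rw [N.sum_mul_lap_eq_neg_dirichletForm hST hT hf, N.sum_mul_lap_eq_neg_dirichletForm hST hT hf,
    N.sum_mul_lap_eq_neg_dirichletForm hST hT hg, neg_sq, neg_mul_neg]
  exact N.dirichletForm_sq_le T f g

variable {N}

/-! ### Superharmonic functions on recurrent networks -/

/-- The finite sequences of steps ending with their first visit of `b`; these index the sum
defining `hitProb`. -/
def firstPassagePaths (b : V) : Set (List V) := {l | l.getLast? = some b ∧ b ∉ l.dropLast}

lemma nil_notMem_firstPassagePaths (b : V) : [] ∉ firstPassagePaths b := by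
  simp [firstPassagePaths]

lemma cons_mem_firstPassagePaths {b y : V} {l : List V} :
    y :: l ∈ firstPassagePaths b ↔ (y = b ∧ l = []) ∨ (y ≠ b ∧ l ∈ firstPassagePaths b) := by
  cases l with
  | nil => simp [firstPassagePaths]
  | cons z l =>
    simp only [firstPassagePaths, Set.mem_ofPred_eq, List.getLast?_cons_cons,
      List.dropLast_cons_cons, List.mem_cons, not_or, reduceCtorEq, and_false, false_or]
    tauto

variable (N)

/-- The probability that the walk started at `x` visits `b` at a time in `[1, n]`. -/
def hitProbWithin (n : ℕ) (x b : V) : ℝ≥0∞ :=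
  ∑' l, {l ∈ firstPassagePaths b | l.length ≤ n}.indicator (N.pathProb x) l

lemma hitProbWithin_zero (x b : V) : N.hitProbWithin 0 x b = 0 := by
  refine ENNReal.tsum_eq_zero.2 fun l => Set.indicator_of_notMem ?_ _
  rintro ⟨hl, hlen⟩
  rw [List.length_eq_zero_iff.1 (Nat.le_zero.1 hlen)] at hl
  exact nil_notMem_firstPassagePaths b hl

lemma hitProbWithin_succ (n : ℕ) (x b : V) :
    N.hitProbWithin (n + 1) x b =
      ∑' y, N.p x y * if y = b then 1 else N.hitProbWithin n y b := by
  rw [hitProbWithin, tsum_list_eq_tsum_cons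
    (Set.indicator_of_notMem (fun h => nil_notMem_firstPassagePaths b h.1) _)]
  refine tsum_congr fun y => ?_
  split_ifs with hy
  · rw [tsum_eq_single []]
    · simp [Set.indicator, cons_mem_firstPassagePaths, hy, pathProb]
    · intro l hl
      simp [cons_mem_firstPassagePaths, hy, hl]
  · rw [hitProbWithin, ← ENNReal.tsum_mul_left]
    refine tsum_congr fun l => ?_
    simp [Set.indicator, cons_mem_firstPassagePaths, hy, pathProb]

lemma hitProb_le_of_hitProbWithin_le {x b : V} (hxb : x ≠ b) {C : ℝ≥0∞}
    (h : ∀ n, N.hitProbWithin n x b ≤ C) : N.hitProb x b ≤ C := by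
  rw [hitProb, if_neg hxb]
  change ∑' l : firstPassagePaths b, N.pathProb x l ≤ C
  rw [tsum_subtype, ENNReal.tsum_eq_iSup_sum]
  refine iSup_le fun S => le_trans ?_ (h (S.sup List.length))
  refine le_trans (Finset.sum_le_sum fun l hl => ?_) (ENNReal.sum_le_tsum S)
  by_cases hlb : l ∈ firstPassagePaths b
  · simp [Set.indicator, hlb, Finset.le_sup (f := List.length) hl]
  · simp [hlb]

variable {N}

lemma tsum_p_mul_le {φ : V → ℝ} (hφ : 0 ≤ φ) {x : V} (hx : N.lap φ x ≤ 0) :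
    ∑' y, N.p x y * ENNReal.ofReal (φ y) ≤ ENNReal.ofReal (φ x) := by
  have hterm (y : V) : N.p x y * ENNReal.ofReal (φ y) =
      ENNReal.ofReal (N.c x y * φ y / N.cv x) := by
    rw [p, ← ENNReal.ofReal_mul (div_nonneg (N.c_nonneg _ _) (N.cv_nonneg x)), div_mul_eq_mul_div]
  have hsum : ∑' y, N.p x y * ENNReal.ofReal (φ y) =
      ENNReal.ofReal ((∑ y ∈ N.neighbors x, N.c x y * φ y) / N.cv x) := by
    rw [Finset.sum_div, ENNReal.ofReal_sum_of_nonneg fun y _ =>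
      div_nonneg (mul_nonneg (N.c_nonneg _ _) (hφ y)) (N.cv_nonneg x)]
    simp only [hterm]
    exact tsum_eq_sum fun y hy => by rw [N.c_eq_zero_of_notMem subset_rfl hy]; simp
  rw [lap_eq_sum_sub, sub_nonpos, mul_comm] at hx
  rw [hsum]
  exact ENNReal.ofReal_le_ofReal (div_le_of_le_mul₀ (N.cv_nonneg x) (hφ x) hx)

lemma hitProb_mul_le {φ : V → ℝ} (hφ : 0 ≤ φ) {b : V} (hs : ∀ v ≠ b, N.lap φ v ≤ 0) (x : V) :
    N.hitProb x b * ENNReal.ofReal (φ b) ≤ ENNReal.ofReal (φ x) := by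
  obtain rfl | hxb := eq_or_ne x b
  · simp [hitProb]
  have hwithin (n : ℕ) : ∀ x ≠ b,
      N.hitProbWithin n x b * ENNReal.ofReal (φ b) ≤ ENNReal.ofReal (φ x) := by
    induction n with
    | zero => simp [hitProbWithin_zero]
    | succ n ih =>
      intro x hx
      rw [hitProbWithin_succ, ← ENNReal.tsum_mul_right]
      refine (ENNReal.tsum_le_tsum fun y => ?_).trans (tsum_p_mul_le hφ (hs x hx))
      rw [mul_assoc]
      gcongr
      split_ifs with hy
      · rw [one_mul, hy]
      · exact ih y hy
  obtain hb | hb := eq_or_ne (ENNReal.ofReal (φ b)) 0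
  · simp [hb]
  rw [← ENNReal.le_div_iff_mul_le (.inl hb) (.inl ENNReal.ofReal_ne_top)]
  exact N.hitProb_le_of_hitProbWithin_le hxb fun n =>
    (ENNReal.le_div_iff_mul_le (.inl hb) (.inl ENNReal.ofReal_ne_top)).2 (hwithin n x hxb)

lemma Recurrent.root_le (hrec : N.Recurrent) {f : V → ℝ} {a : ℝ} (ha : ∀ v, a ≤ f v)
    (hs : ∀ v ≠ N.o, N.lap f v ≤ 0) (v : V) : f N.o ≤ f v := by
  have hnonneg : 0 ≤ f - fun _ => a := fun x => sub_nonneg.2 (ha x)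
  have hle := hitProb_mul_le (N := N) hnonneg (b := N.o)
    (fun x hx => by simpa [lap_sub, lap_const] using hs x hx) v
  rw [hrec v, one_mul, ENNReal.ofReal_le_ofReal_iff (hnonneg v)] at hle
  simpa using hle

/-! ### Compactness of the set of potentials -/

lemma eventually_le_of_lap_le {ι : Type*} {l : Filter ι} {f : ι → V → ℝ} (hf : ∀ i, 0 ≤ f i)
    {w : V} (hw : ∃ C, ∀ᶠ i in l, f i w ≤ C) {b : V → ℝ}
    (hb : ∀ v, ∀ᶠ i in l, N.lap (f i) v ≤ b v) (v : V) : ∃ C, ∀ᶠ i in l, f i v ≤ C := by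
  have hreach := N.connected.preconnected w v
  rw [SimpleGraph.reachable_iff_reflTransGen] at hreach
  induction hreach with
  | refl => exact hw
  | @tail y z _ hyz hy =>
    obtain ⟨C, hC⟩ := hy
    refine ⟨(b y + N.cv y * C) / N.c y z, ?_⟩
    filter_upwards [hC, hb y] with i hiC hib
    rw [le_div_iff₀ (N.c_pos y z hyz), mul_comm]
    rw [lap_eq_sum_sub] at hib
    calc N.c y z * f i z ≤ ∑ x ∈ N.neighbors y, N.c y x * f i x :=
          Finset.single_le_sum (f := fun x => N.c y x * f i x)
            (fun x _ => mul_nonneg (N.c_nonneg y x) (hf i x)) (N.mem_neighbors.2 hyz)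
      _ ≤ b y + N.cv y * f i y := by linarith
      _ ≤ b y + N.cv y * C := by
          gcongr
          exact N.cv_nonneg y

variable (N)

/-- The set `Ψ` of potentials. -/
def potentials : Set (V → ℝ) := {ψ | N.IsPotential ψ}

lemma exists_forall_potentials_le (v : V) : ∃ C, ∀ ψ ∈ N.potentials, ψ v ≤ C := by
  obtain ⟨C, hC⟩ := eventually_le_of_lap_le (N := N) (l := ⊤)
    (f := fun ψ : N.potentials => ψ.1) (fun ψ => ψ.2.1) (w := N.o)
    ⟨0, by simpa using fun ψ hψ => hψ.2.1.le⟩ (b := 1)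
    (fun w => eventually_top.2 fun ⟨ψ, _, _, hroot, hharm⟩ => by
      obtain rfl | hw := eq_or_ne w N.o
      · exact hroot.le
      · exact (hharm w hw).trans_le zero_le_one) v
  exact ⟨C, fun ψ hψ => eventually_top.1 hC ⟨ψ, hψ⟩⟩

lemma isClosed_potentials : IsClosed N.potentials := by
  have hlap (v : V) : Continuous fun ψ => N.lap ψ v := (continuous_apply v).comp N.continuous_lap
  simp only [potentials, IsPotential, Set.ofPred_and, Set.ofPred_forall]
  exact (isClosed_iInter fun v => isClosed_le continuous_const (continuous_apply v)).inter
    ((isClosed_eq (continuous_apply N.o) continuous_const).inter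
    ((isClosed_eq (hlap N.o) continuous_const).inter
    (isClosed_iInter fun v => isClosed_iInter fun _ => isClosed_eq (hlap v) continuous_const)))

lemma isCompact_potentials : IsCompact N.potentials := by
  choose C hC using N.exists_forall_potentials_le
  exact (isCompact_univ_pi fun v => isCompact_Icc (a := 0) (b := C v)).of_isClosed_subset
    N.isClosed_potentials fun ψ hψ v _ => ⟨hψ.1 v, hC v ψ hψ⟩

lemma convex_potentials : Convex ℝ N.potentials := by
  rintro ψ ⟨hψ, hψo, hψl, hψh⟩ χ ⟨hχ, hχo, hχl, hχh⟩ a b ha hb hab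
  refine ⟨fun v => add_nonneg (mul_nonneg ha (hψ v)) (mul_nonneg hb (hχ v)), ?_, ?_, fun v hv => ?_⟩
  · simp [hψo, hχo]
  · simp [lap_add, lap_smul, hψl, hχl, hab]
  · simp [lap_add, lap_smul, hψh v hv, hχh v hv]

variable {N}

/-! ### Truncations -/

variable (N) in
/-- `u` is the truncation of `φ` to the finite set `F`: it keeps the value of `φ` at the root and
the Laplacian of `φ` on `F`, and vanishes elsewhere off `F`. For `φ = 1` this is the equilibrium
function of the root in `F ∪ {o}`. -/
structure IsTruncation (F : Finset V) (φ u : V → ℝ) : Prop where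
  root_notMem : N.o ∉ F
  root_eq : u N.o = φ N.o
  lap_eq : ∀ v ∈ F, N.lap u v = N.lap φ v
  eq_zero : ∀ v ∉ insert N.o F, u v = 0

lemma exists_isTruncation {F : Finset V} (hF : N.o ∉ F) (φ : V → ℝ) :
    ∃ u, N.IsTruncation F φ u := by
  obtain ⟨u, hout, hlap⟩ := exists_lap_eq (N := N) hF (Pi.single N.o (φ N.o)) (N.lap φ)
  refine ⟨u, hF, by simp [hout N.o hF], hlap, fun v hv => ?_⟩
  rw [Finset.mem_insert, not_or] at hv
  rw [hout v hv.2, Pi.single_eq_of_ne hv.1]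

namespace IsTruncation

variable {F : Finset V} {φ u : V → ℝ}

lemma nonneg (hu : N.IsTruncation F φ u) (hroot : 0 ≤ φ N.o) (hs : ∀ v ∈ F, N.lap φ v ≤ 0) :
    0 ≤ u := by
  refine nonneg_of_lap_nonpos hu.root_notMem (fun v hv => ?_) fun v hv =>
    (hu.lap_eq v hv).trans_le (hs v hv)
  obtain rfl | hvo := eq_or_ne v N.o
  · rwa [hu.root_eq]
  · exact (hu.eq_zero v (by simp [hvo, hv])).ge

lemma le (hu : N.IsTruncation F φ u) (hφ : 0 ≤ φ) : u ≤ φ := by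
  refine sub_nonneg.1 (nonneg_of_lap_nonpos (N := N) hu.root_notMem (fun v hv => ?_) fun v hv => ?_)
  · obtain rfl | hvo := eq_or_ne v N.o
    · simp [hu.root_eq]
    · simpa [hu.eq_zero v (by simp [hvo, hv])] using hφ v
  · simp [lap_sub, hu.lap_eq v hv]

end IsTruncation

lemma Recurrent.eq_of_le_of_lap_eq (hrec : N.Recurrent) {φ w : V → ℝ} (hw : 0 ≤ w) (hwφ : w ≤ φ)
    {C : ℝ} (hC : ∀ v, φ v ≤ C) (hroot : w N.o = φ N.o)
    (hlap : ∀ v ≠ N.o, N.lap w v = N.lap φ v) : w = φ := by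
  refine hwφ.antisymm fun v => sub_nonneg.1 ?_
  have hbound (x : V) : -C ≤ (w - φ) x := by
    have hwx : 0 ≤ w x := hw x
    rw [Pi.sub_apply]
    linarith [hC x]
  simpa [hroot] using hrec.root_le hbound (fun x hx => by simp [lap_sub, hlap x hx]) v

lemma Recurrent.tendsto_of_isTruncation (hrec : N.Recurrent) {φ : V → ℝ} (hφ : 0 ≤ φ) {C : ℝ}
    (hC : ∀ v, φ v ≤ C) (hs : ∀ v ≠ N.o, N.lap φ v ≤ 0) {u : Finset V → V → ℝ}
    (hu : ∀ F, N.IsTruncation (F.erase N.o) φ (u F)) : Tendsto u atTop (𝓝 φ) := by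
  refine tendsto_iff_ultrafilter u atTop (𝓝 φ) |>.2 fun U hU => ?_
  have hu_nonneg (F : Finset V) : 0 ≤ u F :=
    (hu F).nonneg (hφ N.o) fun v hv => hs v (Finset.ne_of_mem_erase hv)
  have hu_le (F : Finset V) : u F ≤ φ := (hu F).le hφ
  obtain ⟨w, hw⟩ := exists_tendsto_of_eventually_mem_Icc (U := U) (f := u) (a := 0) (b := φ)
    fun v => .of_forall fun F => ⟨hu_nonneg F v, hu_le F v⟩
  have hw_root : w N.o = φ N.o :=
    tendsto_nhds_unique (tendsto_pi_nhds.1 hw N.o)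
      (tendsto_const_nhds.congr fun F => (hu F).root_eq.symm)
  have hw_lap (v : V) (hv : v ≠ N.o) : N.lap w v = N.lap φ v := by
    refine tendsto_nhds_unique (tendsto_pi_nhds.1 ((N.continuous_lap.tendsto w).comp hw) v)
      (tendsto_const_nhds.congr' ?_)
    filter_upwards [hU (eventually_ge_atTop {v})] with F hF
    exact ((hu F).lap_eq v (Finset.mem_erase.2 ⟨hv, Finset.singleton_subset_iff.1 hF⟩)).symm
  have hwφ : w = φ := hrec.eq_of_le_of_lap_eq
    (ge_of_tendsto' hw hu_nonneg) (le_of_tendsto' hw hu_le) hC hw_root hw_lap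
  exact hwφ ▸ hw

lemma Recurrent.exists_isTruncation_of_eventually (hrec : N.Recurrent) {φ : V → ℝ} (hφ : 0 ≤ φ)
    {C : ℝ} (hC : ∀ v, φ v ≤ C) (hs : ∀ v ≠ N.o, N.lap φ v ≤ 0) {P : (V → ℝ) → Prop}
    (hP : ∀ᶠ u in 𝓝 φ, P u) {F₀ : Finset V} (hF₀ : N.o ∉ F₀) :
    ∃ F u, F₀ ⊆ F ∧ N.IsTruncation F φ u ∧ P u := by
  choose u hu using fun F : Finset V => exists_isTruncation (F.notMem_erase N.o) φ
  obtain ⟨F, hPF, hF⟩ :=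
    (((hrec.tendsto_of_isTruncation hφ hC hs hu).eventually hP).and (eventually_ge_atTop F₀)).exists
  exact ⟨F.erase N.o, u F, Finset.subset_erase.2 ⟨hF, hF₀⟩, hu F, hPF⟩

lemma Recurrent.exists_isTruncation_one (hrec : N.Recurrent) {P : (V → ℝ) → Prop}
    (hP : ∀ᶠ χ in 𝓝 fun _ => 1, P χ) {F₀ : Finset V} (hF₀ : N.o ∉ F₀) :
    ∃ F χ, F₀ ⊆ F ∧ N.IsTruncation F (fun _ => 1) χ ∧ P χ :=
  hrec.exists_isTruncation_of_eventually (fun _ => zero_le_one) (fun _ => le_rfl)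
    (fun v _ => by simp [lap_const]) hP hF₀

/-! ### Green potentials of measures on finite sets -/

variable (N) in
/-- `f` is the Green potential of `ν` for the walk killed on leaving the finite set `F`, which does
not contain the root. -/
structure IsGreenPotential (F : Finset V) (ν f : V → ℝ) : Prop where
  root_notMem : N.o ∉ F
  lap_eq : ∀ v ∈ F, N.lap f v = -ν v
  eq_zero : ∀ v ∉ F, f v = 0

lemma exists_isGreenPotential {F : Finset V} (hF : N.o ∉ F) (ν : V → ℝ) :
    ∃ f, N.IsGreenPotential F ν f := by
  obtain ⟨f, hout, hlap⟩ := exists_lap_eq_of_zero_boundary (N := N) hF (-ν)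
  exact ⟨f, hF, hlap, hout⟩

namespace IsGreenPotential

variable {F : Finset V} {ν f : V → ℝ}

lemma nonneg (hf : N.IsGreenPotential F ν f) (hν : 0 ≤ ν) : 0 ≤ f :=
  nonneg_of_lap_nonpos hf.root_notMem (fun v hv => (hf.eq_zero v hv).ge) fun v hv =>
    (hf.lap_eq v hv).trans_le (neg_nonpos.2 (hν v))

lemma lap_root_eq_sum (hf : N.IsGreenPotential F ν f) {χ : V → ℝ}
    (hχ : N.IsTruncation F (fun _ => 1) χ) : N.lap f N.o = ∑ v ∈ F, ν v * χ v := by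
  have hsymm : ∑ v ∈ insert N.o F, f v * N.lap χ v = ∑ v ∈ insert N.o F, χ v * N.lap f v :=
    N.sum_mul_lap_comm (fun v hv => hf.eq_zero v fun h => hv (Finset.mem_insert_of_mem h))
      hχ.eq_zero
  rw [Finset.sum_insert hf.root_notMem, Finset.sum_insert hf.root_notMem,
    hf.eq_zero N.o hf.root_notMem, hχ.root_eq, zero_mul, one_mul, zero_add] at hsymm
  have hleft : ∑ v ∈ F, f v * N.lap χ v = 0 :=
    Finset.sum_eq_zero fun v hv => by simp [hχ.lap_eq v hv, lap_const]
  have hright : ∑ v ∈ F, χ v * N.lap f v = -∑ v ∈ F, ν v * χ v := by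
    rw [← Finset.sum_neg_distrib]
    exact Finset.sum_congr rfl fun v hv => by rw [hf.lap_eq v hv]; ring
  linarith

-- On `F` the cut-off `φF` of `φ` agrees with `φ` and is at most `φ` elsewhere, so its Laplacian is
-- smaller; unlike `φ`, it vanishes off `F` and can be integrated by parts against `f`.
lemma sum_mul_neg_lap_le (hf : N.IsGreenPotential F ν f) (hν : 0 ≤ ν) {φ : V → ℝ} (hφ : 0 ≤ φ) :
    ∑ v ∈ F, f v * -N.lap φ v ≤ ∑ v ∈ F, ν v * φ v := by
  let φF : V → ℝ := (F : Set V).indicator φ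
  have hφF : ∀ v ∈ F, φF v = φ v := fun v hv => Set.indicator_of_mem (Finset.mem_coe.2 hv) φ
  have hφF_out : ∀ v ∉ F, φF v = 0 := fun v hv =>
    Set.indicator_of_notMem (mt Finset.mem_coe.1 hv) φ
  calc ∑ v ∈ F, f v * -N.lap φ v ≤ ∑ v ∈ F, f v * -N.lap φF v :=
        Finset.sum_le_sum fun v hv => mul_le_mul_of_nonneg_left
          (neg_le_neg (lap_le_lap (Set.indicator_le_self' fun v _ => hφ v) (hφF v hv)))
          (hf.nonneg hν v)
    _ = -∑ v ∈ F, φF v * N.lap f v := by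
        rw [← N.sum_mul_lap_comm hf.eq_zero hφF_out, ← Finset.sum_neg_distrib]
        simp only [mul_neg]
    _ = ∑ v ∈ F, ν v * φ v := by
        rw [← Finset.sum_neg_distrib]
        exact Finset.sum_congr rfl fun v hv => by rw [hf.lap_eq v hv, hφF v hv]; ring

end IsGreenPotential

section Limit

variable {ι : Type*} {U : Ultrafilter ι} {F : ι → Finset V} {ν f : ι → V → ℝ}

lemma exists_isPotential_tendsto (hf : ∀ i, N.IsGreenPotential (F i) (ν i) (f i))
    (hν : ∀ i, 0 ≤ ν i) (hν_zero : ∀ v, ∀ᶠ i in U, ν i v = 0)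
    (hF : ∀ v ≠ N.o, ∀ᶠ i in U, v ∈ F i)
    (hroot : Tendsto (fun i => N.lap (f i) N.o) U (𝓝 1)) :
    ∃ ψ, N.IsPotential ψ ∧ Tendsto f U (𝓝 ψ) := by
  have hf_nonneg (i : ι) : 0 ≤ f i := (hf i).nonneg (hν i)
  have hf_root (i : ι) : f i N.o = 0 := (hf i).eq_zero N.o (hf i).root_notMem
  have hf_harm (v : V) (hv : v ≠ N.o) : ∀ᶠ i in U, N.lap (f i) v = 0 := by
    filter_upwards [hF v hv, hν_zero v] with i hi hi0
    rw [(hf i).lap_eq v hi, hi0, neg_zero]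
  have hf_lap (v : V) : ∀ᶠ i in U, N.lap (f i) v ≤ 2 := by
    obtain rfl | hv := eq_or_ne v N.o
    · exact hroot.eventually_le_const one_lt_two
    · exact (hf_harm v hv).mono fun i hi => hi.trans_le zero_le_two
  choose C hC using eventually_le_of_lap_le hf_nonneg
    ⟨0, .of_forall fun i => (hf_root i).le⟩ (b := fun _ => 2) hf_lap
  obtain ⟨ψ, hψ⟩ := exists_tendsto_of_eventually_mem_Icc (U := U) (f := f) (a := 0) (b := C)
    fun v => (hC v).mono fun i hi => ⟨hf_nonneg i v, hi⟩
  have hψ_lap (v : V) : Tendsto (fun i => N.lap (f i) v) U (𝓝 (N.lap ψ v)) :=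
    tendsto_pi_nhds.1 ((N.continuous_lap.tendsto ψ).comp hψ) v
  refine ⟨ψ, ⟨ge_of_tendsto' hψ hf_nonneg, ?_, tendsto_nhds_unique (hψ_lap N.o) hroot,
    fun v hv => ?_⟩, hψ⟩
  · exact tendsto_nhds_unique (tendsto_pi_nhds.1 hψ N.o)
      (tendsto_const_nhds.congr fun i => (hf_root i).symm)
  · exact tendsto_nhds_unique (hψ_lap v)
      (tendsto_const_nhds.congr' ((hf_harm v hv).mono fun i hi => hi.symm))

lemma sum_mul_neg_lap_le_of_tendsto (hf : ∀ i, N.IsGreenPotential (F i) (ν i) (f i))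
    (hν : ∀ i, 0 ≤ ν i) (hF : ∀ v ≠ N.o, ∀ᶠ i in U, v ∈ F i) {ψ φ : V → ℝ}
    (hfψ : Tendsto f U (𝓝 ψ)) (hφ : 0 ≤ φ) (hs : ∀ v ≠ N.o, N.lap φ v ≤ 0) {K : ℝ}
    (hK : ∀ i, ∑ v ∈ F i, ν i v * φ v ≤ K) {A : Finset V} (hA : N.o ∉ A) :
    ∑ v ∈ A, ψ v * -N.lap φ v ≤ K := by
  have hlim : Tendsto (fun i => ∑ v ∈ A, f i v * -N.lap φ v) U
      (𝓝 (∑ v ∈ A, ψ v * -N.lap φ v)) :=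
    tendsto_finsetSum A fun v _ => (tendsto_pi_nhds.1 hfψ v).mul_const _
  have hAF : ∀ᶠ i in U, ∀ v ∈ A, v ∈ F i :=
    A.eventually_all.2 fun v hv => hF v fun h => hA (h ▸ hv)
  refine le_of_tendsto hlim (hAF.mono fun i hi => ?_)
  calc ∑ v ∈ A, f i v * -N.lap φ v ≤ ∑ v ∈ F i, f i v * -N.lap φ v :=
        Finset.sum_le_sum_of_subset_of_nonneg hi fun v hv _ =>
          mul_nonneg ((hf i).nonneg (hν i) v)
            (neg_nonneg.2 (hs v fun h => (hf i).root_notMem (h ▸ hv)))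
    _ ≤ ∑ v ∈ F i, ν i v * φ v := (hf i).sum_mul_neg_lap_le (hν i) hφ
    _ ≤ K := hK i

end Limit

/-! ### Potentials have infinite energy -/

lemma lap_inf_nonpos {f g : V → ℝ} {v : V} (hf : N.lap f v ≤ 0) (hg : N.lap g v ≤ 0) :
    N.lap (f ⊓ g) v ≤ 0 := by
  obtain h | h := le_total (f v) (g v)
  · exact (lap_le_lap inf_le_left (inf_eq_left.2 h)).trans hf
  · exact (lap_le_lap inf_le_right (inf_eq_right.2 h)).trans hg

variable (N) in
lemma exists_lap_inf_const_eq (f : V → ℝ) (S : Finset V) :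
    ∃ t : ℝ, 0 ≤ t ∧ ∀ v ∈ S, N.lap (f ⊓ fun _ => t) v = N.lap f v := by
  obtain ⟨T, hST, hT⟩ := N.exists_subset_neighbors_subset S
  obtain ⟨b, hb⟩ := (T.image f).bddAbove
  have hle : ∀ v ∈ T, f v ≤ max b 0 := fun v hv =>
    le_max_of_le_left (hb (Finset.mem_coe.2 (Finset.mem_image_of_mem f hv)))
  exact ⟨max b 0, le_max_right _ _, fun v hv =>
    lap_congr (inf_eq_left.2 (hle v (hST hv))) fun x hx => inf_eq_left.2 (hle x (hT v hv hx))⟩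

section EquilibriumFunction

variable {F A : Finset V} {χ : V → ℝ}

lemma IsTruncation.sum_insert_root_mul_eq (hχ : N.IsTruncation F (fun _ => 1) χ) (hA : N.o ∉ A)
    {g : V → ℝ} (hg : ∀ v ∈ F, g v = 0) : ∑ v ∈ insert N.o A, χ v * g v = g N.o := by
  rw [Finset.sum_insert hA, hχ.root_eq, one_mul, add_eq_left]
  refine Finset.sum_eq_zero fun v hv => ?_
  by_cases hvF : v ∈ F
  · rw [hg v hvF, mul_zero]
  · rw [hχ.eq_zero v (by simp [hvF, show v ≠ N.o from fun h => hA (h ▸ hv)]), zero_mul]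

lemma IsTruncation.lap_root_sq_le (hχ : N.IsTruncation F (fun _ => 1) χ) (hFA : F ⊆ A)
    {φ u : V → ℝ} (hu : N.IsTruncation A φ u) (hroot : φ N.o = 0) (hφ : ∀ v ∈ F, N.lap φ v = 0) :
    N.lap u N.o ^ 2 ≤ -N.lap χ N.o * ∑ v ∈ A, u v * -N.lap φ v := by
  have hχ_out : ∀ v ∉ insert N.o A, χ v = 0 := fun v hv =>
    hχ.eq_zero v fun h => hv (Finset.insert_subset_insert N.o hFA h)
  have henergy_u : ∑ v ∈ insert N.o A, u v * N.lap u v = -∑ v ∈ A, u v * -N.lap φ v := by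
    rw [Finset.sum_insert hu.root_notMem, hu.root_eq, hroot, zero_mul, zero_add,
      ← Finset.sum_neg_distrib]
    exact Finset.sum_congr rfl fun v hv => by rw [hu.lap_eq v hv]; ring
  have hcs := N.sum_mul_lap_sq_le hχ_out hu.eq_zero
  rwa [hχ.sum_insert_root_mul_eq hu.root_notMem fun v hv => (hu.lap_eq v (hFA hv)).trans (hφ v hv),
    hχ.sum_insert_root_mul_eq hu.root_notMem fun v hv => by simp [hχ.lap_eq v hv, lap_const],
    henergy_u, mul_neg, ← neg_mul] at hcs

end EquilibriumFunction

lemma IsPotential.lap_inf_const_nonpos {ψ : V → ℝ} (hψ : N.IsPotential ψ) (t : ℝ) {v : V}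
    (hv : v ≠ N.o) : N.lap (ψ ⊓ fun _ => t) v ≤ 0 :=
  lap_inf_nonpos (hψ.2.2.2 v hv).le (by simp [lap_const])

lemma Recurrent.exists_isTruncation_one_neg_lap_root_lt (hrec : N.Recurrent) {ε : ℝ} (hε : 0 < ε) :
    ∃ F χ, N.IsTruncation F (fun _ => 1) χ ∧ 0 ≤ -N.lap χ N.o ∧ -N.lap χ N.o < ε := by
  have hlim : Tendsto (fun χ => -N.lap χ N.o) (𝓝 fun _ => 1) (𝓝 (-N.lap (fun _ => 1) N.o)) :=
    (((continuous_apply N.o).comp N.continuous_lap).tendsto _).neg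
  simp only [lap_const, Pi.zero_apply, neg_zero] at hlim
  obtain ⟨F, χ, -, hχ, hlt⟩ :=
    hrec.exists_isTruncation_one (hlim.eventually_lt_const hε) (Finset.notMem_empty N.o)
  have hle : N.lap χ N.o ≤ N.lap (fun _ => 1) N.o :=
    lap_le_lap (hχ.le fun _ => zero_le_one) hχ.root_eq
  exact ⟨F, χ, hχ, neg_nonneg.2 (by simpa [lap_const] using hle), hlt⟩

lemma Recurrent.exists_lt_sum_mul_neg_lap_inf (hrec : N.Recurrent) {ψ : V → ℝ}
    (hψ : N.IsPotential ψ) {K : ℝ} (hK : 0 ≤ K) : ∃ t : ℝ, 0 ≤ t ∧ ∃ A, N.o ∉ A ∧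
      K < ∑ v ∈ A, ψ v * -N.lap (ψ ⊓ fun _ => t) v := by
  obtain ⟨F, χ, hχ, hχ_nonneg, hχ_lt⟩ :=
    hrec.exists_isTruncation_one_neg_lap_root_lt (ε := 1 / (4 * (K + 1))) (by positivity)
  obtain ⟨t, ht, hlap⟩ := N.exists_lap_inf_const_eq ψ (insert N.o F)
  set φ : V → ℝ := ψ ⊓ fun _ => t
  have hφ_nonneg : 0 ≤ φ := le_inf hψ.1 fun _ => ht
  have hφ_super : ∀ v ≠ N.o, N.lap φ v ≤ 0 := fun v hv => hψ.lap_inf_const_nonpos t hv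
  have hφ_root : φ N.o = 0 := (congrArg (· ⊓ t) hψ.2.1).trans (inf_eq_left.2 ht)
  have hφ_harm : ∀ v ∈ F, N.lap φ v = 0 := fun v hv =>
    (hlap v (Finset.mem_insert_of_mem hv)).trans (hψ.2.2.2 v fun h => hχ.root_notMem (h ▸ hv))
  have hφ_lap_root : N.lap φ N.o = 1 := (hlap N.o (Finset.mem_insert_self _ _)).trans hψ.2.2.1
  obtain ⟨A, u, hFA, hu, hu_root⟩ := hrec.exists_isTruncation_of_eventually hφ_nonneg
    (fun v => inf_le_right) hφ_super (P := fun u => 1 / 2 < N.lap u N.o)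
    ((((continuous_apply N.o).comp N.continuous_lap).tendsto φ).eventually_const_lt
      (by norm_num [hφ_lap_root])) hχ.root_notMem
  refine ⟨t, ht, A, hu.root_notMem, ?_⟩
  have huψ : ∑ v ∈ A, u v * -N.lap φ v ≤ ∑ v ∈ A, ψ v * -N.lap φ v :=
    Finset.sum_le_sum fun v hv => mul_le_mul_of_nonneg_right
      (((hu.le hφ_nonneg).trans inf_le_left) v)
      (neg_nonneg.2 (hφ_super v fun h => hu.root_notMem (h ▸ hv)))
  by_contra! hle
  have hsq : N.lap u N.o ^ 2 ≤ 1 / 4 := calc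
    N.lap u N.o ^ 2 ≤ -N.lap χ N.o * ∑ v ∈ A, u v * -N.lap φ v :=
      hχ.lap_root_sq_le hFA hu hφ_root hφ_harm
    _ ≤ -N.lap χ N.o * (K + 1) := mul_le_mul_of_nonneg_left (by linarith) hχ_nonneg
    _ ≤ 1 / (4 * (K + 1)) * (K + 1) := by gcongr
    _ = 1 / 4 := by field_simp
  nlinarith

/-! ### Balls and spheres -/

variable (N)

lemma finite_dist_le (r : ℕ) : {v | N.G.dist N.o v ≤ r}.Finite := by
  induction r with
  | zero =>
    refine (Set.finite_singleton N.o).subset fun v hv => ?_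
    exact (N.connected.dist_eq_zero_iff.1 (Nat.le_zero.1 hv)).symm
  | succ r ih =>
    refine (ih.union (ih.biUnion fun y _ => (N.neighbors y).finite_toSet)).subset fun v hv => ?_
    obtain hlt | heq := Nat.lt_or_eq_of_le (show N.G.dist N.o v ≤ r + 1 from hv)
    · exact .inl (Nat.lt_succ_iff.1 hlt)
    obtain ⟨q, hq⟩ := N.connected.exists_walk_length_eq_dist N.o v
    have hr : r < q.length := by omega
    have hadj : N.G.Adj (q.getVert r) v := by
      simpa [q.getVert_of_length_le (hq.trans heq).le] using q.adj_getVert_succ hr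
    exact .inr (Set.mem_biUnion (x := q.getVert r) (dist_getVert_eq hq hr.le).le
      (N.mem_neighbors.2 hadj))

/-- The closed ball of radius `r` around the root, as a finite set. -/
def closedBall (r : ℕ) : Finset V := (N.finite_dist_le r).toFinset

/-- The sphere `∂B(o, r)`, as a finite set. -/
def sphere (r : ℕ) : Finset V := {v ∈ N.closedBall r | N.G.dist N.o v = r}

variable {N}

lemma mem_closedBall {r : ℕ} {v : V} : v ∈ N.closedBall r ↔ N.G.dist N.o v ≤ r := by
  simp [closedBall]

lemma mem_sphere {r : ℕ} {v : V} : v ∈ N.sphere r ↔ N.G.dist N.o v = r := by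
  simpa [sphere, mem_closedBall] using fun h => h.le

variable (N) in
lemma sphere_nonempty [Infinite V] (r : ℕ) : (N.sphere r).Nonempty := by
  obtain ⟨v, hv⟩ := Infinite.exists_notMem_finset (N.closedBall r)
  rw [mem_closedBall, not_le] at hv
  obtain ⟨q, hq⟩ := N.connected.exists_walk_length_eq_dist N.o v
  exact ⟨q.getVert r, mem_sphere.2 (dist_getVert_eq hq (hq ▸ hv.le))⟩

/-! ### Potentials that are large on spheres -/

variable (N) in
lemma exists_measure_sum_mul_potential_le {S : Finset V} (hS : S.Nonempty) {K : ℝ}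
    (h : ∀ ψ ∈ N.potentials, ∃ v ∈ S, ψ v ≤ K) :
    ∃ ν : V → ℝ, 0 ≤ ν ∧ (∀ v ∉ S, ν v = 0) ∧ ∑ v ∈ S, ν v = 1 ∧
      ∀ ψ ∈ N.potentials, ∑ v ∈ S, ν v * ψ v ≤ K := by
  have : Nonempty S := hS.to_subtype
  let restrict : (V → ℝ) →L[ℝ] (S → ℝ) :=
    ContinuousLinearMap.pi fun v => ContinuousLinearMap.proj (v : V)
  obtain ⟨μ, ⟨hμ_nonneg, hμ_sum⟩, hμ_le⟩ := exists_mem_stdSimplex_dotProduct_le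
    (N.convex_potentials.linear_image restrict.toLinearMap)
    (N.isCompact_potentials.image restrict.continuous) (K := K) <| by
      rintro _ ⟨ψ, hψ, rfl⟩
      obtain ⟨v, hv, hle⟩ := h ψ hψ
      exact ⟨⟨v, hv⟩, hle⟩
  let ν : V → ℝ := Function.extend Subtype.val μ (0 : V → ℝ)
  have hν (v : S) : ν v = μ v := Subtype.val_injective.extend_apply μ (0 : V → ℝ) v
  have hν_out (v : V) (hv : v ∉ S) : ν v = 0 :=
    Function.extend_apply' μ (0 : V → ℝ) v fun ⟨x, hx⟩ => hv (hx ▸ x.2)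
  refine ⟨ν, fun v => ?_, hν_out, ?_, fun ψ hψ => ?_⟩
  · by_cases hv : v ∈ S
    · exact (hμ_nonneg ⟨v, hv⟩).trans_eq (hν ⟨v, hv⟩).symm
    · exact (hν_out v hv).ge
  · rw [← Finset.sum_coe_sort S, ← hμ_sum]
    exact Finset.sum_congr rfl fun v _ => hν v
  · refine le_of_eq_of_le ?_ (hμ_le _ ⟨ψ, hψ, rfl⟩)
    rw [← Finset.sum_coe_sort S]
    exact Finset.sum_congr rfl fun v _ => by rw [hν]; rfl

lemma Recurrent.exists_isGreenPotential_abs_lap_root_sub_one_lt (hrec : N.Recurrent)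
    {F₀ : Finset V} (hF₀ : N.o ∉ F₀) {ν : V → ℝ} (hν_out : ∀ v ∉ F₀, ν v = 0)
    (hν_sum : ∑ v ∈ F₀, ν v = 1) {δ : ℝ} (hδ : 0 < δ) :
    ∃ F f, F₀ ⊆ F ∧ N.IsGreenPotential F ν f ∧ |N.lap f N.o - 1| < δ := by
  have hlim : Tendsto (fun χ : V → ℝ => |∑ v ∈ F₀, ν v * χ v - 1|) (𝓝 fun _ => 1) (𝓝 0) := by
    have hcont : Continuous fun χ : V → ℝ => |∑ v ∈ F₀, ν v * χ v - 1| := by fun_prop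
    simpa [hν_sum] using hcont.tendsto fun _ => 1
  obtain ⟨F, χ, hF₀F, hχ, hχ_lt⟩ :=
    hrec.exists_isTruncation_one (hlim.eventually_lt_const hδ) hF₀
  obtain ⟨f, hf⟩ := exists_isGreenPotential hχ.root_notMem ν
  refine ⟨F, f, hF₀F, hf, ?_⟩
  rwa [hf.lap_root_eq_sum hχ, ← Finset.sum_subset hF₀F fun v _ hv => by rw [hν_out v hv, zero_mul]]

lemma Recurrent.exists_isGreenPotential_of_sphere [Infinite V] (hrec : N.Recurrent) {r : ℕ}
    (hr : r ≠ 0) {K : ℝ} (h : ∀ ψ ∈ N.potentials, ∃ v ∈ N.sphere r, ψ v ≤ K) {δ : ℝ} (hδ : 0 < δ) :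
    ∃ F ν f, N.IsGreenPotential F ν f ∧ (N.closedBall r).erase N.o ⊆ F ∧ 0 ≤ ν ∧
      (∀ v ∉ N.sphere r, ν v = 0) ∧ (∀ ψ ∈ N.potentials, ∑ v ∈ F, ν v * ψ v ≤ K) ∧
      |N.lap f N.o - 1| < δ := by
  obtain ⟨ν, hν_nonneg, hν_out, hν_sum, hν_le⟩ :=
    N.exists_measure_sum_mul_potential_le (N.sphere_nonempty r) h
  have hsphere : N.sphere r ⊆ (N.closedBall r).erase N.o := fun v hv =>
    Finset.mem_erase.2 ⟨by rintro rfl; simp [mem_sphere, hr.symm] at hv,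
      mem_closedBall.2 (mem_sphere.1 hv).le⟩
  obtain ⟨F, f, hF, hf, hroot⟩ := hrec.exists_isGreenPotential_abs_lap_root_sub_one_lt
    (Finset.notMem_erase N.o _) (fun v hv => hν_out v fun h => hv (hsphere h))
    ((Finset.sum_subset hsphere fun v _ hv => hν_out v hv).symm.trans hν_sum) hδ
  refine ⟨F, ν, f, hf, hF, hν_nonneg, hν_out, fun ψ hψ => ?_, hroot⟩
  rw [← Finset.sum_subset (hsphere.trans hF) fun v _ hv => by rw [hν_out v hv, zero_mul]]
  exact hν_le ψ hψ

lemma Recurrent.not_frequently_exists_le [Infinite V] (hrec : N.Recurrent) {K : ℝ} (hK : 0 ≤ K) :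
    ¬∃ᶠ r in atTop, ∀ ψ ∈ N.potentials, ∃ v ∈ N.sphere r, ψ v ≤ K := by
  intro hfreq
  obtain ⟨r, hr_mono, hr⟩ :=
    extraction_of_frequently_atTop (hfreq.and_eventually (eventually_ne_atTop 0))
  choose F ν f hf hF hν hν_out hK_le hroot using fun n : ℕ =>
    hrec.exists_isGreenPotential_of_sphere (hr n).2 (hr n).1 (Nat.one_div_pos_of_nat (n := n))
  let U : Ultrafilter ℕ := .of atTop
  have hU : (U : Filter ℕ) ≤ atTop := Ultrafilter.of_le atTop
  have hr_gt (v : V) : ∀ᶠ n in U, N.G.dist N.o v < r n :=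
    hU (hr_mono.tendsto_atTop.eventually_gt_atTop _)
  have hF_exhaust : ∀ v ≠ N.o, ∀ᶠ n in U, v ∈ F n := fun v hv => (hr_gt v).mono fun n hn =>
    hF n (Finset.mem_erase.2 ⟨hv, mem_closedBall.2 hn.le⟩)
  have hν_zero (v : V) : ∀ᶠ n in U, ν n v = 0 := (hr_gt v).mono fun n hn =>
    hν_out n v fun h => hn.ne (mem_sphere.1 h)
  have hroot_lim : Tendsto (fun n => N.lap (f n) N.o) U (𝓝 1) :=
    (tendsto_iff_dist_tendsto_zero.2 <| squeeze_zero (fun _ => dist_nonneg)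
      (fun n => (hroot n).le) tendsto_one_div_add_atTop_nhds_zero_nat).mono_left hU
  obtain ⟨ψ, hψ, hfψ⟩ := exists_isPotential_tendsto hf hν hν_zero hF_exhaust hroot_lim
  obtain ⟨t, ht, A, hA, hlt⟩ := hrec.exists_lt_sum_mul_neg_lap_inf hψ hK
  refine hlt.not_ge (sum_mul_neg_lap_le_of_tendsto hf hν hF_exhaust hfψ
    (le_inf hψ.1 fun _ => ht) (fun v hv => hψ.lap_inf_const_nonpos t hv) (fun n => ?_) hA)
  exact (Finset.sum_le_sum fun v _ => mul_le_mul_of_nonneg_left inf_le_left (hν n v)).trans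
    (hK_le n ψ hψ)

lemma bddAbove_range_iInf_sphere [Infinite V] (r : ℕ) :
    BddAbove (Set.range fun ψ : {f : V → ℝ // N.IsPotential f} =>
      ⨅ v : {w : V // N.G.dist N.o w = r}, ψ.1 v.1) := by
  obtain ⟨w, hw⟩ := N.sphere_nonempty r
  obtain ⟨C, hC⟩ := N.exists_forall_potentials_le w
  refine ⟨C, ?_⟩
  rintro _ ⟨ψ, rfl⟩
  have hbdd : BddBelow (Set.range fun v : {w : V // N.G.dist N.o w = r} => ψ.1 v.1) :=
    ⟨0, Set.forall_mem_range.2 fun v => ψ.2.1 v.1⟩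
  exact (ciInf_le hbdd ⟨w, mem_sphere.1 hw⟩).trans (hC ψ.1 ψ.2)

end RootedNetwork

/-- On an infinite recurrent rooted network,
`M(r) = max_{ψ ∈ Ψ} min_{v ∈ ∂B(o,r)} ψ(v)` tends to infinity as `r → ∞`,
where `Ψ` is the set of potentials and `∂B(o,r) = {w : d(o,w) = r}`. -/
theorem sup_inf_potential_tendsto_atTop {V : Type*} [Infinite V]
    (N : RootedNetwork V) (hrec : N.Recurrent) :
    Tendsto (fun r : ℕ =>
        ⨆ ψ : {f : V → ℝ // N.IsPotential f},
          ⨅ v : {w : V // N.G.dist N.o w = r}, ψ.1 v.1)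
      atTop atTop := by
  refine tendsto_atTop.2 fun K => ?_
  filter_upwards [not_frequently.1 (hrec.not_frequently_exists_le (le_max_right K 0))] with r hr
  push Not at hr
  obtain ⟨ψ, hψ, hlt⟩ := hr
  obtain ⟨w, hw⟩ := N.sphere_nonempty r
  have : Nonempty {w : V // N.G.dist N.o w = r} := ⟨w, RootedNetwork.mem_sphere.1 hw⟩
  calc K ≤ ⨅ v : {w : V // N.G.dist N.o w = r}, ψ v.1 := le_ciInf fun v =>
        (le_max_left K 0).trans (hlt v.1 (RootedNetwork.mem_sphere.2 v.2)).le
    _ ≤ _ := le_ciSup (RootedNetwork.bddAbove_range_iInf_sphere r) ⟨ψ, hψ⟩
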